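/- arXiv:2504.08317 — 2 statements merged into one kernel-verified Lean document; each statement's English description precedes it below -/
import Mathlib

section
/- Let D = (0,1)^d and let K : D̄ × D̄ → ℝ be measurable with K(x,·) ∈ L²(D) for every x, such that the Poincaré-type inequality ⟨∫_D K(·,y) φ(y) dy, φ⟩_{L²(D)} ≥ a ‖∫_D K(·,y) φ(y) dy‖²_{L²(D)} holds for every φ ∈ L²(D), for some constant a > 0. Let F : ℝ → ℝ be continuous and bounded with (x − y)(F(x) − F(y)) ≥ −L|x − y|² for all x, y ∈ ℝ and some L ≥ 0, and let g ∈ L²(D). Suppose u, u_n ∈ 𝒞₀(D̄) and η, η_n ∈ 𝒞₀(D̄) satisfy u(x) + ∫_D K(x,y)F(u(y))dy = ∫_D K(x,y)g(y)dy + η(x) and u_n(x) + ∫_D K(x,y)F(u_n(y))dy = ∫_D K(x,y)g(y)dy + η_n(x) for all x ∈ D̄. Then a‖η − η_n‖²_{L²(D)} + (a − L)‖u − u_n‖²_{L²(D)} ≤ ⟨F∘u − F∘u_n + 2a(u − u_n), η − η_n⟩_{L²(D)}. -/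
open MeasureTheory

noncomputable section

/-- The open unit cube `D = (0,1)^d ⊆ ℝ^d`. -/
def openCube (d : ℕ) : Set (Fin d → ℝ) := Set.univ.pi fun _ => Set.Ioo (0 : ℝ) 1

/-- The closed unit cube `D̄ = [0,1]^d ⊆ ℝ^d`. -/
def closedCube (d : ℕ) : Set (Fin d → ℝ) := Set.Icc 0 1

/-- The boundary `∂D = D̄ \ D` of the unit cube. -/
def cubeBoundary (d : ℕ) : Set (Fin d → ℝ) := closedCube d \ openCube d

/-- Lebesgue measure on `D = (0,1)^d` (the reference measure for `L²(D)`). -/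
def cubeMeasure (d : ℕ) : Measure (Fin d → ℝ) := volume.restrict (openCube d)

/-- The Euclidean norm on `ℝ^d`. -/
def euclidNorm {d : ℕ} (v : Fin d → ℝ) : ℝ := Real.sqrt (∑ i, v i ^ 2)

/-- Under the Poincaré-type inequality for the kernel `K` and the
one-sided monotonicity condition `(x − y)(F(x) − F(y)) ≥ −L|x − y|²` on the continuous
bounded function `F`, any two solutions `u, uₙ ∈ 𝒞₀(D̄)` of the integral equation with
data `η, ηₙ ∈ 𝒞₀(D̄)` satisfy
`a‖η − ηₙ‖² + (a − L)‖u − uₙ‖² ≤ ⟨F∘u − F∘uₙ + 2a(u − uₙ), η − ηₙ⟩` in `L²(D)`. -/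
theorem stmt12 (d : ℕ) (hd : 0 < d)
    (K : (Fin d → ℝ) → (Fin d → ℝ) → ℝ) (hKmeas : Measurable (Function.uncurry K))
    (hKL2 : ∀ x ∈ closedCube d, MemLp (K x) 2 (cubeMeasure d))
    (a : ℝ) (ha : 0 < a)
    (hPoincare : ∀ φ : (Fin d → ℝ) → ℝ, MemLp φ 2 (cubeMeasure d) →
      a * ∫ x, (∫ y, K x y * φ y ∂(cubeMeasure d)) ^ 2 ∂(cubeMeasure d)
        ≤ ∫ x, (∫ y, K x y * φ y ∂(cubeMeasure d)) * φ x ∂(cubeMeasure d))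
    (F : ℝ → ℝ) (hFcont : Continuous F) (MF : ℝ) (hFbd : ∀ t, |F t| ≤ MF)
    (L : ℝ) (hL : 0 ≤ L)
    (hFmono : ∀ s t : ℝ, -(L * (s - t) ^ 2) ≤ (s - t) * (F s - F t))
    (g : (Fin d → ℝ) → ℝ) (hg : MemLp g 2 (cubeMeasure d))
    (u uₙ η ηₙ : (Fin d → ℝ) → ℝ)
    (hu : ContinuousOn u (closedCube d)) (hu0 : ∀ x ∈ cubeBoundary d, u x = 0)
    (huₙ : ContinuousOn uₙ (closedCube d)) (huₙ0 : ∀ x ∈ cubeBoundary d, uₙ x = 0)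
    (hη : ContinuousOn η (closedCube d)) (hη0 : ∀ x ∈ cubeBoundary d, η x = 0)
    (hηₙ : ContinuousOn ηₙ (closedCube d)) (hηₙ0 : ∀ x ∈ cubeBoundary d, ηₙ x = 0)
    (hequ : ∀ x ∈ closedCube d,
      u x + ∫ y, K x y * F (u y) ∂(cubeMeasure d)
        = (∫ y, K x y * g y ∂(cubeMeasure d)) + η x)
    (hequₙ : ∀ x ∈ closedCube d,
      uₙ x + ∫ y, K x y * F (uₙ y) ∂(cubeMeasure d)
        = (∫ y, K x y * g y ∂(cubeMeasure d)) + ηₙ x) :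
    a * (∫ y, (η y - ηₙ y) ^ 2 ∂(cubeMeasure d)) +
        (a - L) * (∫ y, (u y - uₙ y) ^ 2 ∂(cubeMeasure d))
      ≤ ∫ y, (F (u y) - F (uₙ y) + 2 * a * (u y - uₙ y)) * (η y - ηₙ y)
          ∂(cubeMeasure d) := by
  have hsub : openCube d ⊆ closedCube d := by
    intro x hx
    constructor
    · intro i; exact (hx i (Set.mem_univ i)).1.le
    · intro i; exact (hx i (Set.mem_univ i)).2.le
  have hmeas : MeasurableSet (openCube d) :=
    MeasurableSet.univ_pi fun _ => measurableSet_Ioo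
  have hint : ∀ f : (Fin d → ℝ) → ℝ, ContinuousOn f (closedCube d) →
      Integrable f (cubeMeasure d) := by
    intro f hf
    have h : IntegrableOn f (closedCube d) volume :=
      hf.integrableOn_compact isCompact_Icc
    exact h.mono_set hsub
  have hL2 : ∀ f : (Fin d → ℝ) → ℝ, ContinuousOn f (closedCube d) →
      MemLp f 2 (cubeMeasure d) := by
    intro f hf
    exact (memLp_two_iff_integrable_sq (hint f hf).aestronglyMeasurable).2
      (hint _ (hf.pow 2))
  have hae : ∀ᵐ x ∂(cubeMeasure d), x ∈ closedCube d := by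
    filter_upwards [ae_restrict_mem hmeas] with x hx using hsub hx
  have hFu : ContinuousOn (fun y => F (u y)) (closedCube d) := hFcont.comp_continuousOn hu
  have hFun : ContinuousOn (fun y => F (uₙ y)) (closedCube d) := hFcont.comp_continuousOn huₙ
  have hf : ContinuousOn (fun y => F (u y) - F (uₙ y)) (closedCube d) := hFu.sub hFun
  have hw : ContinuousOn (fun y => u y - uₙ y) (closedCube d) := hu.sub huₙ
  have he : ContinuousOn (fun y => η y - ηₙ y) (closedCube d) := hη.sub hηₙ
  have key : ∀ x ∈ closedCube d,
      ∫ y, K x y * (F (u y) - F (uₙ y)) ∂(cubeMeasure d) = (η x - ηₙ x) - (u x - uₙ x) := by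
    intro x hx
    have h1 : Integrable (fun y => K x y * F (u y)) (cubeMeasure d) :=
      (hKL2 x hx).integrable_mul (hL2 _ hFu)
    have h2 : Integrable (fun y => K x y * F (uₙ y)) (cubeMeasure d) :=
      (hKL2 x hx).integrable_mul (hL2 _ hFun)
    simp only [mul_sub]
    rw [integral_sub h1 h2]
    linarith [hequ x hx, hequₙ x hx]
  have hP := hPoincare _ (hL2 _ hf)
  have e1 : ∫ x, (∫ y, K x y * (F (u y) - F (uₙ y)) ∂(cubeMeasure d)) ^ 2 ∂(cubeMeasure d)
      = ∫ x, ((η x - ηₙ x) - (u x - uₙ x)) ^ 2 ∂(cubeMeasure d) := by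
    apply integral_congr_ae
    filter_upwards [hae] with x hx
    rw [key x hx]
  have e2 : ∫ x, (∫ y, K x y * (F (u y) - F (uₙ y)) ∂(cubeMeasure d))
        * (F (u x) - F (uₙ x)) ∂(cubeMeasure d)
      = ∫ x, ((η x - ηₙ x) - (u x - uₙ x)) * (F (u x) - F (uₙ x)) ∂(cubeMeasure d) := by
    apply integral_congr_ae
    filter_upwards [hae] with x hx
    rw [key x hx]
  rw [e1, e2] at hP
  have i1 := hint _ ((he.sub hw).pow 2)
  have i2 := hint _ ((he.sub hw).mul hf)
  have i3 := hint _ (he.pow 2)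
  have i4 := hint _ (hw.pow 2)
  have i5 := hint _ ((hf.add (hw.const_smul (2 * a))).mul he)
  simp only [smul_eq_mul, Pi.mul_def, Pi.add_def, Pi.sub_def, Pi.pow_def, Pi.smul_def] at i1 i2 i3 i4 i5
  have hmono : ∫ x, (a * (η x - ηₙ x) ^ 2 + (a - L) * (u x - uₙ x) ^ 2
        + ((η x - ηₙ x) - (u x - uₙ x)) * (F (u x) - F (uₙ x))) ∂(cubeMeasure d)
      ≤ ∫ x, ((F (u x) - F (uₙ x) + 2 * a * (u x - uₙ x)) * (η x - ηₙ x)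
        + a * ((η x - ηₙ x) - (u x - uₙ x)) ^ 2) ∂(cubeMeasure d) := by
    apply integral_mono (((i3.const_mul a).add (i4.const_mul (a - L))).add i2)
      (i5.add (i1.const_mul a))
    intro x
    have := hFmono (u x) (uₙ x)
    simp only [Pi.add_apply]
    linarith
  have i6 : Integrable (fun x => a * (η x - ηₙ x) ^ 2 + (a - L) * (u x - uₙ x) ^ 2)
      (cubeMeasure d) := (i3.const_mul a).add (i4.const_mul (a - L))
  rw [integral_add i6 i2,
    integral_add (i3.const_mul a) (i4.const_mul (a - L)),
    integral_add i5 (i1.const_mul a), integral_const_mul, integral_const_mul,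
    integral_const_mul] at hmono
  linarith
end
end

section
/- Let D = (0,1)^d and let K : D̄ × D̄ → ℝ be measurable with K(x,·) ∈ L²(D) for every x, with Λ := sup_{x∈D̄} ‖K(x,·)‖_{L²(D)} < ∞, and such that ⟨∫_D K(·,y) φ(y) dy, φ⟩_{L²(D)} ≥ a ‖∫_D K(·,y) φ(y) dy‖²_{L²(D)} for every φ ∈ L²(D), for some constant a > 0. Let F : ℝ → ℝ be continuous and bounded with (x − y)(F(x) − F(y)) ≥ −L|x − y|² for all x, y ∈ ℝ and some 0 ≤ L < a, and let g ∈ L²(D). Suppose u, u_n ∈ 𝒞₀(D̄) and η, η_n ∈ 𝒞₀(D̄) satisfy u(x) + ∫_D K(x,y)F(u(y))dy = ∫_D K(x,y)g(y)dy + η(x) and u_n(x) + ∫_D K(x,y)F(u_n(y))dy = ∫_D K(x,y)g(y)dy + η_n(x) for all x ∈ D̄. If ‖η_n − η‖_{L²(D)} → 0 as n → ∞, then ‖u_n − u‖_{L²(D)} → 0 as n → ∞. -/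
open MeasureTheory

noncomputable section

open Filter Topology

lemma aux_integrable {d : ℕ} {f : (Fin d → ℝ) → ℝ} (hf : ContinuousOn f (closedCube d)) :
    Integrable f (cubeMeasure d) := by
  have h : IntegrableOn f (closedCube d) volume :=
    hf.integrableOn_compact (by unfold closedCube; exact isCompact_Icc)
  refine h.mono_set ?_
  intro x hx
  simp only [openCube, Set.mem_univ_pi, Set.mem_Ioo] at hx
  exact ⟨fun i => (hx i).1.le, fun i => (hx i).2.le⟩

lemma aux_sub (d : ℕ) : openCube d ⊆ closedCube d := by
  intro x hx
  simp only [openCube, Set.mem_univ_pi, Set.mem_Ioo] at hx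
  exact ⟨fun i => (hx i).1.le, fun i => (hx i).2.le⟩

lemma aux_meas (d : ℕ) : MeasurableSet (openCube d) :=
  MeasurableSet.univ_pi fun _ => measurableSet_Ioo

lemma aux_prob (d : ℕ) : IsProbabilityMeasure (cubeMeasure d) := by
  constructor
  simp [cubeMeasure, openCube, Real.volume_pi_Ioo]

lemma aux_memLp {d : ℕ} {f : (Fin d → ℝ) → ℝ} (hf : ContinuousOn f (closedCube d)) :
    MemLp f 2 (cubeMeasure d) := by
  rw [memLp_two_iff_integrable_sq (aux_integrable hf).aestronglyMeasurable]
  exact aux_integrable (hf.pow 2)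

lemma aux_eLpNorm {d : ℕ} {f : (Fin d → ℝ) → ℝ} (hf : ContinuousOn f (closedCube d)) :
    eLpNorm f 2 (cubeMeasure d) = ENNReal.ofReal (Real.sqrt (∫ x, f x ^ 2 ∂(cubeMeasure d))) := by
  rw [(aux_memLp hf).eLpNorm_eq_integral_rpow_norm (by norm_num) (by norm_num)]
  simp [Real.sqrt_eq_rpow]

lemma aux_jensen {d : ℕ} {f : (Fin d → ℝ) → ℝ} (hf : ContinuousOn f (closedCube d)) :
    ∫ x, |f x| ∂(cubeMeasure d) ≤ Real.sqrt (∫ x, f x ^ 2 ∂(cubeMeasure d)) := by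
  have := aux_prob d
  apply Real.le_sqrt_of_sq_le
  set I := ∫ x, |f x| ∂(cubeMeasure d) with hI
  have h0 : 0 ≤ ∫ x, (|f x| - I) ^ 2 ∂(cubeMeasure d) := integral_nonneg fun x => sq_nonneg _
  have h1 : ∫ x, (|f x| - I) ^ 2 ∂(cubeMeasure d)
      = ∫ x, ((f x ^ 2 - (2 * I) * |f x|) + I ^ 2) ∂(cubeMeasure d) := by
    congr 1; ext x; rw [← sq_abs (f x)]; ring
  have i1 : Integrable (fun x => f x ^ 2) (cubeMeasure d) := aux_integrable (hf.pow 2)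
  have i2 : Integrable (fun x => (2 * I) * |f x|) (cubeMeasure d) :=
    (aux_integrable hf.abs).const_mul _
  rw [h1, integral_add (by exact i1.sub i2) (integrable_const _), integral_sub i1 i2,
    integral_const_mul, ← hI] at h0
  simp at h0
  nlinarith

/-- Under the Poincaré-type inequality for the kernel `K` (with
`Λ = sup_x ‖K(x,·)‖_{L²} < ∞`), the monotonicity condition on the continuous bounded
function `F` with `0 ≤ L < a`, if `u, uₙ ∈ 𝒞₀(D̄)` solve the integral equations with
data `η, ηₙ ∈ 𝒞₀(D̄)` and `‖ηₙ − η‖_{L²(D)} → 0`, then `‖uₙ − u‖_{L²(D)} → 0`. -/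
theorem stmt13 (d : ℕ) (hd : 0 < d)
    (K : (Fin d → ℝ) → (Fin d → ℝ) → ℝ) (hKmeas : Measurable (Function.uncurry K))
    (hKL2 : ∀ x ∈ closedCube d, MemLp (K x) 2 (cubeMeasure d))
    (Λ : ℝ) (hΛ : ∀ x ∈ closedCube d, eLpNorm (K x) 2 (cubeMeasure d) ≤ ENNReal.ofReal Λ)
    (a : ℝ) (ha : 0 < a)
    (hPoincare : ∀ φ : (Fin d → ℝ) → ℝ, MemLp φ 2 (cubeMeasure d) →
      a * ∫ x, (∫ y, K x y * φ y ∂(cubeMeasure d)) ^ 2 ∂(cubeMeasure d)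
        ≤ ∫ x, (∫ y, K x y * φ y ∂(cubeMeasure d)) * φ x ∂(cubeMeasure d))
    (F : ℝ → ℝ) (hFcont : Continuous F) (MF : ℝ) (hFbd : ∀ t, |F t| ≤ MF)
    (L : ℝ) (hL0 : 0 ≤ L) (hLa : L < a)
    (hFmono : ∀ s t : ℝ, -(L * (s - t) ^ 2) ≤ (s - t) * (F s - F t))
    (g : (Fin d → ℝ) → ℝ) (hg : MemLp g 2 (cubeMeasure d))
    (u : (Fin d → ℝ) → ℝ) (uₙ : ℕ → (Fin d → ℝ) → ℝ)
    (η : (Fin d → ℝ) → ℝ) (ηₙ : ℕ → (Fin d → ℝ) → ℝ)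
    (hu : ContinuousOn u (closedCube d)) (hu0 : ∀ x ∈ cubeBoundary d, u x = 0)
    (huₙ : ∀ n, ContinuousOn (uₙ n) (closedCube d))
    (huₙ0 : ∀ n, ∀ x ∈ cubeBoundary d, uₙ n x = 0)
    (hη : ContinuousOn η (closedCube d)) (hη0 : ∀ x ∈ cubeBoundary d, η x = 0)
    (hηₙ : ∀ n, ContinuousOn (ηₙ n) (closedCube d))
    (hηₙ0 : ∀ n, ∀ x ∈ cubeBoundary d, ηₙ n x = 0)
    (hequ : ∀ x ∈ closedCube d,
      u x + ∫ y, K x y * F (u y) ∂(cubeMeasure d)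
        = (∫ y, K x y * g y ∂(cubeMeasure d)) + η x)
    (hequₙ : ∀ n, ∀ x ∈ closedCube d,
      uₙ n x + ∫ y, K x y * F (uₙ n y) ∂(cubeMeasure d)
        = (∫ y, K x y * g y ∂(cubeMeasure d)) + ηₙ n x)
    (hηconv : Tendsto (fun n => eLpNorm (fun y => ηₙ n y - η y) 2 (cubeMeasure d))
      atTop (𝓝 0)) :
    Tendsto (fun n => eLpNorm (fun y => uₙ n y - u y) 2 (cubeMeasure d))
      atTop (𝓝 0) := by
  set μ := cubeMeasure d with hμ
  have hMF : 0 ≤ MF := (abs_nonneg _).trans (hFbd 0)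
  have key : ∀ n, (a - L) / 2 * ∫ x, (uₙ n x - u x) ^ 2 ∂μ
      ≤ 2 * MF * Real.sqrt (∫ x, (ηₙ n x - η x) ^ 2 ∂μ)
        + (2 * a ^ 2 / (a - L)) * ∫ x, (ηₙ n x - η x) ^ 2 ∂μ := by
    intro n
    have cw : ContinuousOn (fun x => uₙ n x - u x) (closedCube d) := (huₙ n).sub hu
    have cz : ContinuousOn (fun x => ηₙ n x - η x) (closedCube d) := (hηₙ n).sub hη
    have cF1 : ContinuousOn (fun x => F (uₙ n x)) (closedCube d) := hFcont.comp_continuousOn (huₙ n)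
    have cF0 : ContinuousOn (fun x => F (u x)) (closedCube d) := hFcont.comp_continuousOn hu
    have cφ : ContinuousOn (fun x => F (uₙ n x) - F (u x)) (closedCube d) := cF1.sub cF0
    have hT : ∀ x ∈ closedCube d, ∫ y, K x y * (F (uₙ n y) - F (u y)) ∂μ
        = (ηₙ n x - η x) - (uₙ n x - u x) := by
      intro x hx
      have j1 : Integrable (fun y => K x y * F (uₙ n y)) μ := (hKL2 x hx).integrable_mul (aux_memLp cF1)
      have j0 : Integrable (fun y => K x y * F (u y)) μ := (hKL2 x hx).integrable_mul (aux_memLp cF0)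
      have e1 := hequₙ n x hx
      have e0 := hequ x hx
      simp only [mul_sub]
      rw [integral_sub j1 j0]
      linarith
    have hae : ∀ᵐ x ∂μ, x ∈ closedCube d := by
      rw [hμ, cubeMeasure]
      filter_upwards [ae_restrict_mem (aux_meas d)] with x hx using aux_sub d hx
    have hP := hPoincare _ (aux_memLp cφ)
    have r1 : ∫ x, (∫ y, K x y * (F (uₙ n y) - F (u y)) ∂μ) ^ 2 ∂μ
        = ∫ x, ((ηₙ n x - η x) - (uₙ n x - u x)) ^ 2 ∂μ := by
      apply integral_congr_ae
      filter_upwards [hae] with x hx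
      rw [hT x hx]
    have r2 : ∫ x, (∫ y, K x y * (F (uₙ n y) - F (u y)) ∂μ) * (F (uₙ n x) - F (u x)) ∂μ
        = ∫ x, ((ηₙ n x - η x) - (uₙ n x - u x)) * (F (uₙ n x) - F (u x)) ∂μ := by
      apply integral_congr_ae
      filter_upwards [hae] with x hx
      rw [hT x hx]
    rw [r1, r2, ← integral_const_mul] at hP
    have hJ := aux_jensen cz
    have iw2 : Integrable (fun x => (uₙ n x - u x) ^ 2) μ := aux_integrable (cw.pow 2)
    have iz2 : Integrable (fun x => (ηₙ n x - η x) ^ 2) μ := aux_integrable (cz.pow 2)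
    have iz : Integrable (fun x => |ηₙ n x - η x|) μ := aux_integrable cz.abs
    have iA : Integrable (fun x => a * ((ηₙ n x - η x) - (uₙ n x - u x)) ^ 2) μ :=
      (aux_integrable ((cz.sub cw).pow 2)).const_mul _
    have iB : Integrable
        (fun x => ((ηₙ n x - η x) - (uₙ n x - u x)) * (F (uₙ n x) - F (u x))) μ :=
      aux_integrable ((cz.sub cw).mul cφ)
    have hal : 0 < a - L := by linarith
    have hpt : ∀ x, (a - L) / 2 * (uₙ n x - u x) ^ 2
        ≤ (a * ((ηₙ n x - η x) - (uₙ n x - u x)) ^ 2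
          - ((ηₙ n x - η x) - (uₙ n x - u x)) * (F (uₙ n x) - F (u x)))
        + (2 * MF * |ηₙ n x - η x| + (2 * a ^ 2 / (a - L)) * (ηₙ n x - η x) ^ 2) := by
      intro x
      have m := hFmono (uₙ n x) (u x)
      have b : (ηₙ n x - η x) * (F (uₙ n x) - F (u x)) ≤ 2 * MF * |ηₙ n x - η x| := by
        have b1 : |F (uₙ n x) - F (u x)| ≤ 2 * MF := by
          have := abs_sub (F (uₙ n x)) (F (u x))
          linarith [hFbd (uₙ n x), hFbd (u x)]
        calc _ ≤ |(ηₙ n x - η x) * (F (uₙ n x) - F (u x))| := le_abs_self _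
          _ = |F (uₙ n x) - F (u x)| * |ηₙ n x - η x| := by rw [abs_mul, mul_comm]
          _ ≤ _ := mul_le_mul_of_nonneg_right b1 (abs_nonneg _)
      have q : 0 ≤ (a - L) / 2 * (uₙ n x - u x) ^ 2 - 2 * a * (ηₙ n x - η x) * (uₙ n x - u x)
          + 2 * a ^ 2 / (a - L) * (ηₙ n x - η x) ^ 2 := by
        have e : (a - L) / 2 * (uₙ n x - u x) ^ 2 - 2 * a * (ηₙ n x - η x) * (uₙ n x - u x)
          + 2 * a ^ 2 / (a - L) * (ηₙ n x - η x) ^ 2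
          = (a - L) / 2 * ((uₙ n x - u x) - 2 * a / (a - L) * (ηₙ n x - η x)) ^ 2 := by
          field_simp
          ring
        rw [e]
        positivity
      have q2 : 0 ≤ a * (ηₙ n x - η x) ^ 2 := by positivity
      generalize uₙ n x - u x = w at *
      generalize ηₙ n x - η x = z at *
      generalize F (uₙ n x) - F (u x) = f at *
      generalize 2 * a ^ 2 / (a - L) = c at *
      linarith [show a * (z - w) ^ 2 - (z - w) * f = a * z ^ 2 - 2 * a * z * w + a * w ^ 2
        - z * f + w * f by ring]
    have hint := integral_mono (iw2.const_mul ((a - L) / 2)) ((iA.sub iB).add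
      ((iz.const_mul (2 * MF)).add (iz2.const_mul (2 * a ^ 2 / (a - L))))) hpt
    simp only [Pi.add_apply, Pi.sub_apply] at hint
    rw [integral_add (by exact iA.sub iB)
        (by exact (iz.const_mul (2 * MF)).add (iz2.const_mul (2 * a ^ 2 / (a - L)))),
      integral_sub iA iB,
      integral_add (iz.const_mul _) (iz2.const_mul _), integral_const_mul ((a - L) / 2),
      integral_const_mul (2 * MF), integral_const_mul (2 * a ^ 2 / (a - L))] at hint
    have := mul_le_mul_of_nonneg_left hJ (by positivity : 0 ≤ 2 * MF)
    linarith
  have hal : 0 < a - L := by linarith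
  have hz0 : Tendsto (fun n => Real.sqrt (∫ x, (ηₙ n x - η x) ^ 2 ∂μ)) atTop (𝓝 0) := by
    have h := (ENNReal.tendsto_toReal ENNReal.zero_ne_top).comp hηconv
    refine h.congr fun n => ?_
    have cz : ContinuousOn (fun x => ηₙ n x - η x) (closedCube d) := (hηₙ n).sub hη
    simp only [Function.comp]
    rw [hμ, aux_eLpNorm cz, ENNReal.toReal_ofReal (Real.sqrt_nonneg _)]
  have hbd : Tendsto (fun n => (2 / (a - L)) * (2 * MF * Real.sqrt (∫ x, (ηₙ n x - η x) ^ 2 ∂μ)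
        + (2 * a ^ 2 / (a - L)) * Real.sqrt (∫ x, (ηₙ n x - η x) ^ 2 ∂μ) ^ 2)) atTop (𝓝 0) := by
    have h := (((hz0.const_mul (2 * MF)).add ((hz0.pow 2).const_mul (2 * a ^ 2 / (a - L))))).const_mul
      (2 / (a - L))
    simpa using h
  have hw : Tendsto (fun n => ∫ x, (uₙ n x - u x) ^ 2 ∂μ) atTop (𝓝 0) := by
    refine squeeze_zero (fun n => integral_nonneg fun x => sq_nonneg _) (fun n => ?_) hbd
    rw [Real.sq_sqrt (integral_nonneg fun x => sq_nonneg _)]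
    have h := mul_le_mul_of_nonneg_left (key n) (by positivity : 0 ≤ 2 / (a - L))
    refine le_trans (le_of_eq ?_) h
    field_simp
  have hfin := ENNReal.tendsto_ofReal ((Real.continuous_sqrt.tendsto 0).comp hw)
  rw [Real.sqrt_zero, ENNReal.ofReal_zero] at hfin
  refine hfin.congr fun n => ?_
  have cw : ContinuousOn (fun x => uₙ n x - u x) (closedCube d) := (huₙ n).sub hu
  rw [hμ, aux_eLpNorm cw]
  rfl
end
end
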